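/- Suppose that h₂(g₂(ŷ₁)) lies in the range of f for every ŷ₁ ∈ 𝒴₁, and h₂(ŷ₂) lies in the range of f for every ŷ₂ ∈ 𝒴₂. Then for every distortion level D > 0, there is no difference in the minimal achievable rate when encoding either intermediate feature: R_{Y₂}(D;T) = R_{Y₁}(D;T) = R_X(D;T). -/

import Mathlib

open scoped BigOperators

/-- Joint distribution P(a,b) = p(a)·k(a)(b) induced by a source `p` and a channel `k`,
as a real number. -/
noncomputable def jointP {A B : Type*} [Fintype A] [Fintype B] (p : PMF A) (k : A → PMF B)
    (a : A) (b : B) : ℝ :=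
  (p a * k a b).toReal

/-- Marginal distribution of the second coordinate of the joint induced by `(p, k)`. -/
noncomputable def margSnd {A B : Type*} [Fintype A] [Fintype B] (p : PMF A) (k : A → PMF B)
    (b : B) : ℝ :=
  ∑ a, jointP p k a b

/-- Mutual information I(A;B) = ∑_{a,b} P(a,b)·log(P(a,b)/(P(a)·P(b))) of the joint
induced by `(p, k)`; the convention 0·log 0 = 0 holds automatically in Lean. -/
noncomputable def mutualInfo {A B : Type*} [Fintype A] [Fintype B] (p : PMF A)
    (k : A → PMF B) : ℝ :=
  ∑ a, ∑ b, jointP p k a b * Real.log (jointP p k a b / ((p a).toReal * margSnd p k b))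

/-- Expected distortion E[d(A,B)] under the joint induced by `(p, k)`. -/
noncomputable def expDist {A B : Type*} [Fintype A] [Fintype B] (p : PMF A) (k : A → PMF B)
    (d : A → B → ℝ) : ℝ :=
  ∑ a, ∑ b, jointP p k a b * d a b

/-- Rate-distortion function: infimum of mutual information over all channels `A → PMF B`
meeting the expected-distortion constraint `≤ D`. -/
noncomputable def rate {A B : Type*} [Fintype A] [Fintype B] (p : PMF A) (d : A → B → ℝ)
    (D : ℝ) : ℝ :=
  sInf { r : ℝ | ∃ k : A → PMF B, expDist p k d ≤ D ∧ r = mutualInfo p k }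

/-- Conditional probability P(A = a | B = b) under the joint induced by `(p, k)`. -/
noncomputable def condProb {A B : Type*} [Fintype A] [Fintype B] (p : PMF A) (k : A → PMF B)
    (a : A) (b : B) : ℝ :=
  jointP p k a b / margSnd p k b

section RateInvariance

variable {A B C A' B' : Type*} [Fintype A] [Fintype B] [Fintype C] [Fintype A'] [Fintype B']

lemma PMF.sum_toReal (p : PMF A) : ∑ a, (p a).toReal = 1 := by
  rw [← ENNReal.toReal_sum fun a _ => p.apply_ne_top a, ← tsum_fintype (L := .unconditional A),
    p.tsum_coe, ENNReal.toReal_one]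

open Classical in
lemma PMF.sum_map_toReal_mul (p : PMF A) (g : A → B) (F : B → ℝ) :
    ∑ b, (p.map g b).toReal * F b = ∑ a, (p a).toReal * F (g a) := by
  have key (b : B) : (p.map g b).toReal = ∑ a, if b = g a then (p a).toReal else 0 := by
    rw [PMF.map_apply, tsum_fintype, ENNReal.toReal_sum]
    · exact Finset.sum_congr rfl fun a _ => by split_ifs <;> simp
    · intro a _
      split_ifs <;> simp [p.apply_ne_top]
  simp_rw [key, Finset.sum_mul]
  rw [Finset.sum_comm]
  simp

lemma jointP_eq (p : PMF A) (k : A → PMF B) (a : A) (b : B) :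
    jointP p k a b = (p a).toReal * (k a b).toReal := ENNReal.toReal_mul

lemma jointP_nonneg (p : PMF A) (k : A → PMF B) (a : A) (b : B) : 0 ≤ jointP p k a b :=
  ENNReal.toReal_nonneg

lemma margSnd_nonneg (p : PMF A) (k : A → PMF B) (b : B) : 0 ≤ margSnd p k b :=
  Finset.sum_nonneg fun a _ => jointP_nonneg p k a b

lemma jointP_le_margSnd (p : PMF A) (k : A → PMF B) (a : A) (b : B) :
    jointP p k a b ≤ margSnd p k b :=
  Finset.single_le_sum (f := fun a => jointP p k a b)
    (fun a _ => jointP_nonneg p k a b) (Finset.mem_univ a)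

lemma mul_margSnd_pos {p : PMF A} {k : A → PMF B} {a : A} {b : B} (h : 0 < jointP p k a b) :
    0 < (p a).toReal * margSnd p k b := by
  refine mul_pos ?_ (h.trans_le (jointP_le_margSnd p k a b))
  rw [jointP_eq] at h
  exact pos_of_mul_pos_left h ENNReal.toReal_nonneg

lemma sum_jointP_snd (p : PMF A) (k : A → PMF B) (a : A) :
    ∑ b, jointP p k a b = (p a).toReal := by
  simp_rw [jointP_eq, ← Finset.mul_sum, PMF.sum_toReal, mul_one]

lemma sum_jointP (p : PMF A) (k : A → PMF B) : ∑ a, ∑ b, jointP p k a b = 1 := by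
  simp_rw [sum_jointP_snd, PMF.sum_toReal]

/-- The joint law induced by `(p', k')` is the image under `φ × ψ` of the one induced by
`(p, k)`, expressed through expectations. -/
def IsJointImage (p : PMF A) (k : A → PMF B) (p' : PMF A') (k' : A' → PMF B')
    (φ : A → A') (ψ : B → B') : Prop :=
  ∀ F : A' → B' → ℝ,
    ∑ a', ∑ b', jointP p' k' a' b' * F a' b' = ∑ a, ∑ b, jointP p k a b * F (φ a) (ψ b)

namespace IsJointImage

variable {p : PMF A} {k : A → PMF B} {p' : PMF A'} {k' : A' → PMF B'} {φ : A → A'} {ψ : B → B'}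

lemma sum_fst (h : IsJointImage p k p' k' φ ψ) (G : A' → ℝ) :
    ∑ a', (p' a').toReal * G a' = ∑ a, (p a).toReal * G (φ a) := by
  simpa only [← Finset.sum_mul, sum_jointP_snd] using h fun a' _ => G a'

lemma sum_snd (h : IsJointImage p k p' k' φ ψ) (G : B' → ℝ) :
    ∑ b', margSnd p' k' b' * G b' = ∑ b, margSnd p k b * G (ψ b) := by
  have := h fun _ b' => G b'
  rw [Finset.sum_comm, Finset.sum_comm (s := (Finset.univ : Finset A))] at this
  simpa only [margSnd, Finset.sum_mul] using this

lemma sum_prod (h : IsJointImage p k p' k' φ ψ) (G : A' → B' → ℝ) :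
    ∑ a', ∑ b', (p' a').toReal * margSnd p' k' b' * G a' b' =
      ∑ a, ∑ b, (p a).toReal * margSnd p k b * G (φ a) (ψ b) := by
  simp_rw [mul_assoc, ← Finset.mul_sum, h.sum_snd]
  exact h.sum_fst fun a' => ∑ b, margSnd p k b * G a' (ψ b)

open Classical in
lemma jointP_le (h : IsJointImage p k p' k' φ ψ) (a : A) (b : B) :
    jointP p k a b ≤ jointP p' k' (φ a) (ψ b) := by
  have := h fun a' b' => if a' = φ a then if b' = ψ b then 1 else 0 else 0
  simp only [mul_ite, mul_one, mul_zero] at this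
  have hL : ∑ a', ∑ b', (if a' = φ a then if b' = ψ b then jointP p' k' a' b' else 0 else 0) =
      jointP p' k' (φ a) (ψ b) := by
    rw [Finset.sum_eq_single (φ a) (fun a' _ ha' => by simp [ha']) (by simp)]
    simp
  rw [hL] at this
  rw [this]
  have nonneg (x : A) (y : B) :
      0 ≤ if φ x = φ a then if ψ y = ψ b then jointP p k x y else 0 else 0 := by
    split_ifs <;> first | exact jointP_nonneg .. | exact le_rfl
  calc jointP p k a b
      = if φ a = φ a then if ψ b = ψ b then jointP p k a b else 0 else 0 := by simp
    _ ≤ ∑ y, if φ a = φ a then if ψ y = ψ b then jointP p k a y else 0 else 0 :=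
        Finset.single_le_sum
          (f := fun y => if φ a = φ a then if ψ y = ψ b then jointP p k a y else 0 else 0)
          (fun y _ => nonneg a y) (Finset.mem_univ b)
    _ ≤ _ := Finset.single_le_sum
          (f := fun x => ∑ y, if φ x = φ a then if ψ y = ψ b then jointP p k x y else 0 else 0)
          (fun x _ => Finset.sum_nonneg fun y _ => nonneg x y) (Finset.mem_univ a)

/-- Data processing inequality. -/
theorem mutualInfo_le (h : IsJointImage p k p' k' φ ψ) :
    mutualInfo p' k' ≤ mutualInfo p k := by
  let r : A' → B' → ℝ := fun a' b' =>
    jointP p' k' a' b' / ((p' a').toReal * margSnd p' k' b')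
  have hsum : ∑ a, ∑ b, (p a).toReal * margSnd p k b * r (φ a) (ψ b) = 1 := by
    rw [← h.sum_prod, ← sum_jointP p' k']
    refine Finset.sum_congr rfl fun a' _ => Finset.sum_congr rfl fun b' _ => ?_
    rcases (jointP_nonneg p' k' a' b').eq_or_lt with h0 | h0
    · simp [r, ← h0]
    · exact mul_div_cancel₀ _ (mul_margSnd_pos h0).ne'
  have hterm (a : A) (b : B) :
      jointP p k a b * Real.log (r (φ a) (ψ b)) ≤
        jointP p k a b * Real.log (jointP p k a b / ((p a).toReal * margSnd p k b)) +
          ((p a).toReal * margSnd p k b * r (φ a) (ψ b) - jointP p k a b) := by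
    rcases (jointP_nonneg p k a b).eq_or_lt with h0 | h0
    · have : 0 ≤ (p a).toReal * margSnd p k b * r (φ a) (ψ b) :=
        mul_nonneg (mul_nonneg ENNReal.toReal_nonneg (margSnd_nonneg ..))
          (div_nonneg (jointP_nonneg ..)
            (mul_nonneg ENNReal.toReal_nonneg (margSnd_nonneg ..)))
      simpa [← h0] using this
    · have hJ' := h0.trans_le (h.jointP_le a b)
      have hr : 0 < r (φ a) (ψ b) := div_pos hJ' (mul_margSnd_pos hJ')
      have hq := mul_margSnd_pos h0
      have hlog := Real.log_le_sub_one_of_pos (div_pos hr (div_pos h0 hq))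
      rw [Real.log_div hr.ne' (div_pos h0 hq).ne'] at hlog
      have hmul := mul_le_mul_of_nonneg_left hlog h0.le
      have heq : jointP p k a b *
          (r (φ a) (ψ b) / (jointP p k a b / ((p a).toReal * margSnd p k b)) - 1) =
            (p a).toReal * margSnd p k b * r (φ a) (ψ b) - jointP p k a b := by
        rw [mul_sub, mul_one, div_div_eq_mul_div, mul_div_cancel₀ _ h0.ne', mul_comm (r _ _)]
      linarith
  calc mutualInfo p' k'
      = ∑ a, ∑ b, jointP p k a b * Real.log (r (φ a) (ψ b)) :=
        h fun a' b' => Real.log (r a' b')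
    _ ≤ _ := Finset.sum_le_sum fun a _ => Finset.sum_le_sum fun b _ => hterm a b
    _ = mutualInfo p k := by
        simp only [Finset.sum_add_distrib, Finset.sum_sub_distrib]
        rw [hsum, sum_jointP, sub_self, add_zero, mutualInfo]

end IsJointImage

lemma mutualInfo_nonneg (p : PMF A) (k : A → PMF B) : 0 ≤ mutualInfo p k := by
  have h : IsJointImage p k (PMF.pure ()) (fun _ => PMF.pure ()) (fun _ => ()) (fun _ => ()) := by
    intro F
    simp_rw [← Finset.sum_mul, sum_jointP]
    simp [jointP]
  simpa [mutualInfo, jointP, margSnd] using h.mutualInfo_le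

lemma isJointImage_map_snd (p : PMF A) (k : A → PMF B) (ψ : B → C) :
    IsJointImage p k p (fun a => (k a).map ψ) id ψ := by
  intro F
  simp_rw [jointP_eq, mul_assoc, ← Finset.mul_sum, PMF.sum_map_toReal_mul, id]

lemma sum_jointP_comp (p : PMF A) (g : A → B) (K : B → PMF C) (F : B → C → ℝ) :
    ∑ a, ∑ c, jointP p (fun a => K (g a)) a c * F (g a) c =
      ∑ b, ∑ c, jointP (p.map g) K b c * F b c := by
  simp_rw [jointP_eq, mul_assoc, ← Finset.mul_sum]
  exact (p.sum_map_toReal_mul g fun b => ∑ c, (K b c).toReal * F b c).symm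

lemma margSnd_comp (p : PMF A) (g : A → B) (K : B → PMF C) (c : C) :
    margSnd p (fun a => K (g a)) c = margSnd (p.map g) K c := by
  simp_rw [margSnd, jointP_eq]
  exact (p.sum_map_toReal_mul g fun b => (K b c).toReal).symm

lemma mutualInfo_eq_sum_channel (p : PMF A) (k : A → PMF B) :
    mutualInfo p k =
      ∑ a, ∑ b, jointP p k a b * Real.log ((k a b).toReal / margSnd p k b) := by
  refine Finset.sum_congr rfl fun a _ => Finset.sum_congr rfl fun b _ => ?_
  rw [jointP_eq]
  rcases eq_or_ne (p a).toReal 0 with h0 | h0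
  · simp [h0]
  · rw [mul_div_mul_left _ _ h0]

/-- A channel that only looks at `g a` carries the same information about `a` as about `g a`. -/
lemma mutualInfo_comp (p : PMF A) (g : A → B) (K : B → PMF C) :
    mutualInfo p (fun a => K (g a)) = mutualInfo (p.map g) K := by
  simp_rw [mutualInfo_eq_sum_channel, margSnd_comp]
  exact sum_jointP_comp p g K fun b c => Real.log ((K b c).toReal / margSnd (p.map g) K c)

open Classical in
/-- The conditional law of the channel output given the value of `g` on the input. -/
lemma exists_isJointImage_map_fst (p : PMF A) (g : A → B) (k : A → PMF C) :
    ∃ K : B → PMF C, IsJointImage p k (p.map g) K g id := by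
  have hK (b : B) : ∃ q : PMF C, ∀ c,
      p.map g b * q c = ∑ a, if b = g a then p a * k a c else 0 := by
    by_cases hb : p.map g b = 0
    · obtain ⟨a₀, -⟩ := p.support_nonempty
      refine ⟨k a₀, fun c => ?_⟩
      rw [PMF.map_apply, tsum_fintype] at hb
      rw [PMF.map_apply, tsum_fintype, hb, zero_mul, eq_comm, Finset.sum_eq_zero_iff]
      intro a ha
      have := Finset.sum_eq_zero_iff.mp hb a ha
      split_ifs at this ⊢ <;> simp_all
    · have hmap : p.map g b = ∑ a, Set.indicator {a | b = g a} p a := by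
        rw [PMF.map_apply, tsum_fintype]
        simp [Set.indicator_apply]
      have hex : ∃ a ∈ {a | b = g a}, a ∈ p.support := by
        obtain ⟨a, ha, rfl⟩ := (PMF.mem_support_map_iff g p b).mp hb
        exact ⟨a, rfl, ha⟩
      refine ⟨(p.filter {a | b = g a} hex).bind k, fun c => ?_⟩
      rw [PMF.bind_apply, tsum_fintype, Finset.mul_sum]
      refine Finset.sum_congr rfl fun a _ => ?_
      rw [PMF.filter_apply, tsum_fintype, ← hmap, mul_comm (Set.indicator _ _ _), ← mul_assoc,
        ← mul_assoc, ENNReal.mul_inv_cancel hb (PMF.apply_ne_top _ _), one_mul]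
      simp [Set.indicator_apply]
  choose K hK using hK
  refine ⟨K, fun F => ?_⟩
  have hJ (b : B) (c : C) :
      jointP (p.map g) K b c = ∑ a, if b = g a then jointP p k a c else 0 := by
    rw [jointP, hK, ENNReal.toReal_sum]
    · exact Finset.sum_congr rfl fun a _ => by split_ifs <;> simp [jointP]
    · intro a _
      split_ifs <;> simp [ENNReal.mul_ne_top, PMF.apply_ne_top]
  simp_rw [hJ, Finset.sum_mul]
  rw [Finset.sum_comm, Finset.sum_comm (s := (Finset.univ : Finset A))]
  refine Finset.sum_congr rfl fun c _ => ?_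
  rw [Finset.sum_comm]
  simp

lemma bddBelow_rate_set (p : PMF A) (d : A → B → ℝ) (D : ℝ) :
    BddBelow {r : ℝ | ∃ k : A → PMF B, expDist p k d ≤ D ∧ r = mutualInfo p k} :=
  ⟨0, by rintro _ ⟨k, -, rfl⟩; exact mutualInfo_nonneg p k⟩

/-- If the reconstruction `b` can always be matched, as far as the distortion is concerned, by
some `g a`, then coding `g a` is as expensive as coding `a`. -/
theorem rate_map_eq (p : PMF A) (g : A → B) (d : B → B → ℝ)
    (s : B → A) (hs : ∀ b b', d b (g (s b')) = d b b') (D : ℝ) :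
    rate (p.map g) d D = rate p (fun a a' => d (g a) (g a')) D := by
  have toFeature (k : A → PMF A) (hk : expDist p k (fun a a' => d (g a) (g a')) ≤ D) :
      ∃ K : B → PMF B, expDist (p.map g) K d ≤ D ∧ mutualInfo (p.map g) K ≤ mutualInfo p k := by
    obtain ⟨K, hK⟩ := exists_isJointImage_map_fst p g fun a => (k a).map g
    have hk' := isJointImage_map_snd p k g
    refine ⟨K, ?_, hK.mutualInfo_le.trans hk'.mutualInfo_le⟩
    exact ((hK d).trans (hk' fun a b => d (g a) b)).trans_le hk
  have toSource (K : B → PMF B) (hK : expDist (p.map g) K d ≤ D) :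
      ∃ k : A → PMF A, expDist p k (fun a a' => d (g a) (g a')) ≤ D ∧
        mutualInfo p k ≤ mutualInfo (p.map g) K := by
    have h := isJointImage_map_snd p (fun a => K (g a)) s
    refine ⟨fun a => (K (g a)).map s, ?_, h.mutualInfo_le.trans (mutualInfo_comp p g K).le⟩
    refine ((h fun a a' => d (g a) (g a')).trans ?_).trans_le hK
    simp_rw [hs, id]
    exact sum_jointP_comp p g K d
  unfold rate
  by_cases hne : ∃ k : A → PMF A, expDist p k (fun a a' => d (g a) (g a')) ≤ D
  · obtain ⟨k₀, hk₀⟩ := hne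
    obtain ⟨K₀, hK₀, -⟩ := toFeature k₀ hk₀
    apply le_antisymm
    · refine le_csInf ⟨_, k₀, hk₀, rfl⟩ ?_
      rintro _ ⟨k, hk, rfl⟩
      obtain ⟨K, hK, hle⟩ := toFeature k hk
      exact (csInf_le (bddBelow_rate_set _ _ _) ⟨K, hK, rfl⟩).trans hle
    · refine le_csInf ⟨_, K₀, hK₀, rfl⟩ ?_
      rintro _ ⟨K, hK, rfl⟩
      obtain ⟨k, hk, hle⟩ := toSource K hK
      exact (csInf_le (bddBelow_rate_set _ _ _) ⟨k, hk, rfl⟩).trans hle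
  · congr 1
    ext r
    constructor
    · rintro ⟨K, hK, -⟩
      obtain ⟨k, hk, -⟩ := toSource K hK
      exact (hne ⟨k, hk⟩).elim
    · rintro ⟨k, hk, -⟩
      exact (hne ⟨k, hk⟩).elim

end RateInvariance

/-- With f = h₂ ∘ g₂ ∘ g₁, if h₂(g₂(ŷ₁)) ∈ range f for all ŷ₁ and
h₂(ŷ₂) ∈ range f for all ŷ₂, then for every D > 0,
R_{Y₂}(D;T) = R_{Y₁}(D;T) = R_X(D;T). -/
theorem split_points_equal_rates
    {𝒳 𝒴₁ 𝒴₂ 𝒯 : Type*} [Fintype 𝒳] [Fintype 𝒴₁] [Fintype 𝒴₂] [Fintype 𝒯]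
    [Nonempty 𝒳] [Nonempty 𝒴₁] [Nonempty 𝒴₂] [Nonempty 𝒯]
    (pX : PMF 𝒳) (g₁ : 𝒳 → 𝒴₁) (g₂ : 𝒴₁ → 𝒴₂) (h₂ : 𝒴₂ → 𝒯)
    (dT : 𝒯 → 𝒯 → ℝ) (hdT : ∀ t t', 0 ≤ dT t t')
    (hr1 : ∀ yhat₁ : 𝒴₁, h₂ (g₂ yhat₁) ∈ Set.range (fun x => h₂ (g₂ (g₁ x))))
    (hr2 : ∀ yhat₂ : 𝒴₂, h₂ yhat₂ ∈ Set.range (fun x => h₂ (g₂ (g₁ x))))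
    (D : ℝ) (hD : 0 < D) :
    rate ((pX.map g₁).map g₂) (fun y₂ yhat₂ => dT (h₂ y₂) (h₂ yhat₂)) D
        = rate (pX.map g₁) (fun y₁ yhat₁ => dT (h₂ (g₂ y₁)) (h₂ (g₂ yhat₁))) D ∧
    rate (pX.map g₁) (fun y₁ yhat₁ => dT (h₂ (g₂ y₁)) (h₂ (g₂ yhat₁))) D
        = rate pX (fun x xhat => dT (h₂ (g₂ (g₁ x))) (h₂ (g₂ (g₁ xhat)))) D := by
  choose s₁ hs₁ using hr1
  choose s₂ hs₂ using hr2
  exact ⟨rate_map_eq (pX.map g₁) g₂ (fun y₂ yhat₂ => dT (h₂ y₂) (h₂ yhat₂))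
      (fun y₂ => g₁ (s₂ y₂)) (fun y₂ yhat₂ => congrArg (dT (h₂ y₂)) (hs₂ yhat₂)) D,
    rate_map_eq pX g₁ (fun y₁ yhat₁ => dT (h₂ (g₂ y₁)) (h₂ (g₂ yhat₁)))
      s₁ (fun y₁ yhat₁ => congrArg (dT (h₂ (g₂ y₁))) (hs₁ yhat₁)) D⟩
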